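/- arXiv:1502.03967 — 5 statements merged into one kernel-verified Lean document; each statement's English description precedes it below -/
import Mathlib

section
/- Let > be a control order on the monomials of A' = K[x₁,…,xₙ,t₁,…,t_s] whose local variables are exactly t₁,…,t_s, with multiplicative set S' := {1+g : g = 0 or lt(g) < 1} ⊆ A'. Then the Krull dimension of A / β(I,J) equals the Krull dimension of S'⁻¹A' / S'⁻¹I'. -/
open scoped Classical

noncomputable section

/-- A semigroup order on monomials: a strict total order on exponent vectors (written
additively; the monomial `1` corresponds to `0`) compatible with multiplication. -/
def IsSemigroupOrder {σ : Type*} (lt : (σ →₀ ℕ) → (σ →₀ ℕ) → Prop) : Prop :=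
  IsStrictTotalOrder (σ →₀ ℕ) lt ∧ ∀ a b c : σ →₀ ℕ, lt a b → lt (c + a) (c + b)

/-- The variable `i` is local for the order `lt`, i.e. `x_i < 1`. -/
def IsLocalVar {σ : Type*} (lt : (σ →₀ ℕ) → (σ →₀ ℕ) → Prop) (i : σ) : Prop :=
  lt (Finsupp.single i 1) 0

/-- A control order: a semigroup order under which every monomial divisible by a local
variable is `< 1`. -/
def IsControlOrder {σ : Type*} (lt : (σ →₀ ℕ) → (σ →₀ ℕ) → Prop) : Prop :=
  IsSemigroupOrder lt ∧ ∀ m : σ →₀ ℕ, (∃ i, IsLocalVar lt i ∧ m i ≠ 0) → lt m 0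

/-- `m` is the leading monomial of `g` w.r.t. `lt`. -/
def IsLeadingMonomial {K : Type*} [CommSemiring K] {σ : Type*}
    (lt : (σ →₀ ℕ) → (σ →₀ ℕ) → Prop) (g : MvPolynomial σ K) (m : σ →₀ ℕ) : Prop :=
  m ∈ g.support ∧ ∀ m' ∈ g.support, m' ≠ m → lt m' m

/-- The multiplicative set `S = {1 + g : g = 0 or lt(g) < 1}`. -/
def SDen (K : Type*) [CommSemiring K] {σ : Type*}
    (lt : (σ →₀ ℕ) → (σ →₀ ℕ) → Prop) : Set (MvPolynomial σ K) :=
  {f | ∃ g : MvPolynomial σ K, f = 1 + g ∧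
    (g = 0 ∨ ∃ m, IsLeadingMonomial lt g m ∧ lt m 0)}

/-- `I = ⋂ i ∈ s, Q i` is a minimal primary decomposition: every `Q i` is primary, the
radicals are pairwise distinct, and no component contains the intersection of the others. -/
def MinPrimDecOn {R : Type*} [CommRing R] {ι : Type*} (I : Ideal R) (Q : ι → Ideal R)
    (s : Finset ι) : Prop :=
  I = ⨅ i ∈ s, Q i ∧ (∀ i ∈ s, (Q i).IsPrimary) ∧
    (∀ i ∈ s, ∀ j ∈ s, (Q i).radical = (Q j).radical → i = j) ∧
    ∀ i ∈ s, ¬ (⨅ j ∈ s.erase i, Q j) ≤ Q i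

/-- The extraction determined by the decomposition `Q` (over `s`) and the ideal `J`:
the intersection of those components `Q i` with `Q i + J ≠ A` (which is `⊤` = the whole
ring when there are no such components). -/
def extractionFrom {R : Type*} [CommRing R] {ι : Type*} (J : Ideal R) (Q : ι → Ideal R)
    (s : Finset ι) : Ideal R :=
  ⨅ i ∈ s.filter (fun i => Q i ⊔ J ≠ ⊤), Q i

/-- `B` is the extraction `β(I,J)` of `I` by `J`. -/
def IsExtraction {R : Type*} [CommRing R] (I J B : Ideal R) : Prop :=
  ∃ (k : ℕ) (Q : Fin k → Ideal R), MinPrimDecOn I Q Finset.univ ∧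
    B = extractionFrom J Q Finset.univ

/-- `t ⊆ s` determines an isolated set of primes of the decomposition `Q` over `s`. -/
def IsIsolatedOn {R : Type*} [CommRing R] {ι : Type*} (Q : ι → Ideal R)
    (s t : Finset ι) : Prop :=
  t ⊆ s ∧ ∀ j ∈ s, (∃ i ∈ t, (Q j).radical ≤ (Q i).radical) → j ∈ t

/-- The lifted ideal `W' = ⟨W, t₁ - g₁, …, t_s - g_s⟩ ⊆ A' = K[x₁,…,xₙ,t₁,…,t_s]`. -/
def liftIdeal {K : Type*} [CommRing K] {n s : ℕ} (g : Fin s → MvPolynomial (Fin n) K)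
    (W : Ideal (MvPolynomial (Fin n) K)) : Ideal (MvPolynomial (Fin n ⊕ Fin s) K) :=
  W.map (MvPolynomial.rename (Sum.inl : Fin n → Fin n ⊕ Fin s)).toRingHom ⊔
    Ideal.span (Set.range fun w : Fin s =>
      (MvPolynomial.X (Sum.inr w) : MvPolynomial (Fin n ⊕ Fin s) K) -
        MvPolynomial.rename (Sum.inl : Fin n → Fin n ⊕ Fin s) (g w))

/-- The substitution homomorphism `φ : A' → A`, fixing each `x_i` and sending `t_w ↦ g_w`. -/
def substHom {K : Type*} [CommRing K] {n s : ℕ} (g : Fin s → MvPolynomial (Fin n) K) :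
    MvPolynomial (Fin n ⊕ Fin s) K →ₐ[K] MvPolynomial (Fin n) K :=
  MvPolynomial.aeval (Sum.elim MvPolynomial.X g)

/-!
Both sides are the Krull dimension of the poset of primes `P ⊇ I` of `A` with `P + J ≠ A`.

Under a control order `S' = 1 + 𝔟`, where `𝔟` is generated by the local variables `t_w`. Hence the
primes of `S'⁻¹A' / S'⁻¹I'` correspond to the primes `P' ⊇ I'` of `A'` with `P' + 𝔟 ≠ A'`. Since
`I'` is the preimage of `I` under the substitution `t_w ↦ g_w`, which maps `𝔟` onto `J`, these
correspond to the primes above.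

The primes containing `β(I,J)` may form a larger poset, but not one of larger dimension: if
`Q_i + J` lies in a maximal ideal `m`, then chains of primes below `m` already attain `dim A/Q_i`,
because every maximal ideal of an affine domain has height equal to the dimension.
-/

section AffineDomains

theorem height_mvPolynomial_fin_of_isMaximal {K : Type*} [Field K] :
    ∀ (n : ℕ) (M : Ideal (MvPolynomial (Fin n) K)) [M.IsMaximal], M.height = n
  | 0, M, _ => by
    have height_le := Ideal.height_le_ringKrullDim_of_isPrime (I := M)
    rw [ringKrullDim_mvPolynomial_of_isEmpty, ringKrullDim_eq_zero_of_field] at height_le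
    simpa using height_le
  | n + 1, M, _ => by
    let e := (MvPolynomial.finSuccEquiv K n).toRingEquiv
    let P := M.comap e.symm
    have : P.IsMaximal := Ideal.comap_isMaximal_of_equiv e.symm
    let p := P.under (MvPolynomial (Fin n) K)
    have : P.LiesOver p := ⟨rfl⟩
    have : p.IsMaximal := Polynomial.isMaximal_comap_C_of_isJacobsonRing P
    calc M.height = P.height := (RingEquiv.height_comap e.symm M).symm
      _ = p.height + 1 := Polynomial.height_eq_height_add_one p P
      _ = (n + 1 : ℕ) := by rw [height_mvPolynomial_fin_of_isMaximal n p, Nat.cast_succ]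

theorem ringKrullDim_le_of_isIntegral (R S : Type*) [CommRing R] [CommRing S] [Algebra R S]
    [Algebra.IsIntegral R S] : ringKrullDim S ≤ ringKrullDim R :=
  Order.krullDim_le_of_strictMono (PrimeSpectrum.comap (algebraMap R S)) fun P _ hPQ ↦
    Ideal.IsIntegral.comap_lt_comap (I := P.asIdeal) hPQ

theorem height_eq_ringKrullDim_of_isMaximal (K : Type*) {R : Type*} [Field K] [CommRing R]
    [IsDomain R] [Algebra K R] [Algebra.FiniteType K R] (M : Ideal R) [M.IsMaximal] :
    (M.height : WithBot ℕ∞) = ringKrullDim R := by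
  refine le_antisymm Ideal.height_le_ringKrullDim_of_isPrime ?_
  have : IsNoetherianRing R := Algebra.FiniteType.isNoetherianRing K R
  obtain ⟨d, f, f_injective, f_integral⟩ := exists_integral_inj_algHom_of_fg K R
  let := f.toRingHom.toAlgebra
  have : Algebra.IsIntegral (MvPolynomial (Fin d) K) R := ⟨f_integral⟩
  have : FaithfulSMul (MvPolynomial (Fin d) K) R :=
    (faithfulSMul_iff_algebraMap_injective _ _).mpr f_injective
  let m := M.under (MvPolynomial (Fin d) K)
  have : m.IsMaximal := Ideal.isMaximal_comap_of_isIntegral_of_isMaximal M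
  have d_le_height : (d : ℕ∞) ≤ M.height := by
    rw [Ideal.height_eq_height_add_of_liesOver_of_hasGoingDown m M,
      height_mvPolynomial_fin_of_isMaximal]
    exact le_self_add
  calc ringKrullDim R ≤ ringKrullDim (MvPolynomial (Fin d) K) := ringKrullDim_le_of_isIntegral _ _
    _ = (d : ℕ∞) := by
      rw [MvPolynomial.ringKrullDim_of_isNoetherianRing, ringKrullDim_eq_zero_of_field]
      simp
    _ ≤ M.height := WithBot.coe_le_coe.mpr d_le_height

end AffineDomains

section PrimesMeeting

open PrimeSpectrum Topology

variable {R A : Type*} [CommRing R] [CommRing A]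

theorem krullDim_mono {α : Type*} [Preorder α] {s t : Set α} (h : s ⊆ t) :
    Order.krullDim s ≤ Order.krullDim t :=
  Order.krullDim_le_of_strictMono (Set.inclusion h) fun _ _ hab ↦ hab

theorem comap_le_comap_iff_of_isInducing {f : R →+* A} (hf : IsInducing (comap f))
    {p q : PrimeSpectrum A} : comap f p ≤ comap f q ↔ p ≤ q := by
  rw [le_iff_specializes, le_iff_specializes, hf.specializes_iff]

theorem krullDim_image_comap_of_isInducing {f : R →+* A} (hf : IsInducing (comap f))
    (s : Set (PrimeSpectrum A)) : Order.krullDim (comap f '' s) = Order.krullDim s :=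
  let e : s ≃ comap f '' s := Equiv.Set.image _ _ hf.injective
  (Order.krullDim_eq_of_orderIso ⟨e, comap_le_comap_iff_of_isInducing hf⟩).symm

theorem mem_zeroLocus_iInf {ι : Type*} {s : Finset ι} {Q : ι → Ideal R} {P : PrimeSpectrum R} :
    P ∈ zeroLocus ((⨅ i ∈ s, Q i : Ideal R) : Set R) ↔ ∃ i ∈ s, Q i ≤ P.asIdeal := by
  rw [mem_zeroLocus, SetLike.coe_subset_coe, ← Finset.inf_eq_iInf, P.isPrime.inf_le']

theorem ringKrullDim_quotient_iInf {ι : Type*} (s : Finset ι) (Q : ι → Ideal R) :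
    ringKrullDim (R ⧸ ⨅ i ∈ s, Q i) = ⨆ i ∈ s, ringKrullDim (R ⧸ Q i) := by
  simp only [ringKrullDim_quotient]
  refine le_antisymm ?_ (iSup₂_le fun i hi ↦ krullDim_mono
    (zeroLocus_anti_mono_ideal (iInf₂_le i hi)))
  rw [Order.krullDim_eq_iSup_coheight]
  refine iSup_le fun P ↦ ?_
  obtain ⟨i, hi, hQP⟩ := mem_zeroLocus_iInf.mp P.2
  rw [Order.coheight_eq_krullDim_Ici]
  refine le_iSup₂_of_le i hi (Order.krullDim_le_of_strictMono
    (fun q ↦ ⟨q.1.1, hQP.trans q.2⟩) fun _ _ hpq ↦ hpq)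

/-- The primes `P` whose closed set `V(P)` meets `V(J)`, i.e. those with `P + J ≠ R`. -/
def primesMeeting (J : Ideal R) : Set (PrimeSpectrum R) :=
  {P | P.asIdeal ⊔ J ≠ ⊤}

theorem preimage_comap_primesMeeting {φ : R →+* A} (hφ : Function.Surjective φ) (J : Ideal R) :
    comap φ ⁻¹' primesMeeting J = primesMeeting (J.map φ) := by
  ext P
  refine not_congr ?_
  have comap_sup_map : (P.asIdeal ⊔ J.map φ).comap φ = P.asIdeal.comap φ ⊔ J := by
    rw [← Ideal.map_comap_of_surjective φ hφ P.asIdeal, ← Ideal.map_sup,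
      Ideal.comap_map_of_surjective' φ hφ, Ideal.map_comap_of_surjective φ hφ, sup_eq_left]
    exact (Ideal.ker_le_comap φ).trans le_sup_left
  rw [comap_asIdeal, ← comap_sup_map, Ideal.comap_eq_top_iff]

theorem krullDim_zeroLocus_comap_inter_primesMeeting {φ : R →+* A}
    (hφ : Function.Surjective φ) (I : Ideal A) (J : Ideal R) :
    Order.krullDim ↑(zeroLocus (I.comap φ : Set R) ∩ primesMeeting J) =
      Order.krullDim ↑(zeroLocus (I : Set A) ∩ primesMeeting (J.map φ)) := by
  rw [← krullDim_image_comap_of_isInducing (comap_isInducing_of_surjective _ φ hφ),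
    ← preimage_comap_primesMeeting hφ, Set.image_inter_preimage,
    image_comap_zeroLocus_eq_zeroLocus_comap _ _ hφ]

theorem setOf_disjoint_eq_primesMeeting {S : Submonoid R} {J : Ideal R}
    (hS : ∀ f, f ∈ S ↔ f - 1 ∈ J) :
    {P : PrimeSpectrum R | Disjoint (S : Set R) P.asIdeal} = primesMeeting J := by
  ext P
  rw [primesMeeting, Set.mem_ofPred_eq, Set.mem_ofPred_eq, ← not_iff_not, Set.not_disjoint_iff,
    not_not, Ideal.eq_top_iff_one, Submodule.mem_sup]
  constructor
  · rintro ⟨f, hfS, hfP⟩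
    exact ⟨f, hfP, 1 - f, by simpa using neg_mem ((hS f).mp hfS), by ring⟩
  · rintro ⟨f, hfP, b, hb, hfb⟩
    refine ⟨f, (hS f).mpr ?_, hfP⟩
    rw [eq_sub_of_add_eq hfb]
    simpa using hb

theorem ringKrullDim_quotient_map_algebraMap {S : Submonoid R} {J : Ideal R}
    (hS : ∀ f, f ∈ S ↔ f - 1 ∈ J) (B : Type*) [CommRing B] [Algebra R B] [IsLocalization S B]
    (I : Ideal R) :
    ringKrullDim (B ⧸ I.map (algebraMap R B)) =
      Order.krullDim ↑(zeroLocus (I : Set R) ∩ primesMeeting J) := by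
  rw [ringKrullDim_quotient,
    ← krullDim_image_comap_of_isInducing (localization_comap_isInducing B S), Ideal.map,
    zeroLocus_span, ← preimage_comap_zeroLocus, Set.image_preimage_eq_inter_range,
    localization_comap_range B S, setOf_disjoint_eq_primesMeeting hS]

end PrimesMeeting

section Extraction

open PrimeSpectrum

variable {R : Type*} [CommRing R]

theorem ringKrullDim_quotient_eq_krullDim_Icc (K : Type*) [Field K] [Algebra K R]
    [Algebra.FiniteType K R] {p m : PrimeSpectrum R} (hpm : p ≤ m) (hm : m.asIdeal.IsMaximal) :
    ringKrullDim (R ⧸ p.asIdeal) = Order.krullDim (Set.Icc p m) := by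
  let π := Ideal.Quotient.mk p.asIdeal
  have hπ : Function.Surjective π := Ideal.Quotient.mk_surjective
  have π_isInducing := comap_isInducing_of_surjective _ π hπ
  have range_comap : Set.range (comap π) = Set.Ici p := by
    rw [range_comap_of_surjective _ π hπ, Ideal.mk_ker]
    rfl
  have map_isMaximal : (m.asIdeal.map π).IsMaximal :=
    .map_of_surjective_of_ker_le hπ (by rwa [Ideal.mk_ker])
  let m' : PrimeSpectrum (R ⧸ p.asIdeal) := ⟨m.asIdeal.map π, map_isMaximal.isPrime⟩
  have comap_m' : comap π m' = m := PrimeSpectrum.ext (Ideal.comap_map_mk hpm)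
  have image_Iic : comap π '' Set.Iic m' = Set.Icc p m := by
    have : Set.Iic m' = comap π ⁻¹' Set.Iic m := by
      ext q
      simp only [Set.mem_preimage, Set.mem_Iic, ← comap_m',
        comap_le_comap_iff_of_isInducing π_isInducing]
    rw [this, Set.image_preimage_eq_inter_range, range_comap, Set.inter_comm, Set.Ici_inter_Iic]
  rw [← height_eq_ringKrullDim_of_isMaximal K m'.asIdeal, height_eq_orderHeight m',
    Order.height_eq_krullDim_Iic, ← krullDim_image_comap_of_isInducing π_isInducing, image_Iic]

theorem ringKrullDim_quotient_le_krullDim_inter_primesMeeting (K : Type*) [Field K] [Algebra K R]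
    [Algebra.FiniteType K R] {Q J : Ideal R} (hQ : Q.radical.IsPrime) (hQJ : Q ⊔ J ≠ ⊤) :
    ringKrullDim (R ⧸ Q) ≤ Order.krullDim ↑(zeroLocus (Q : Set R) ∩ primesMeeting J) := by
  obtain ⟨m, hm, hQJm⟩ := Ideal.exists_le_maximal _ hQJ
  obtain ⟨M, rfl⟩ : ∃ M : PrimeSpectrum R, M.asIdeal = m := ⟨⟨m, hm.isPrime⟩, rfl⟩
  obtain ⟨p, hp⟩ : ∃ p : PrimeSpectrum R, p.asIdeal = Q.radical := ⟨⟨Q.radical, hQ⟩, rfl⟩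
  have hQp : Q ≤ p.asIdeal := hp ▸ Ideal.le_radical
  have hpM : p.asIdeal ≤ M.asIdeal :=
    hp ▸ M.isPrime.radical_le_iff.mpr (le_sup_left.trans hQJm)
  have Icc_subset : Set.Icc p M ⊆ zeroLocus (Q : Set R) ∩ primesMeeting J := fun q hq ↦
    ⟨hQp.trans hq.1, ne_top_of_le_ne_top hm.ne_top (sup_le hq.2 (le_sup_right.trans hQJm))⟩
  calc ringKrullDim (R ⧸ Q) = ringKrullDim (R ⧸ p.asIdeal) := by
        rw [ringKrullDim_quotient, ringKrullDim_quotient, hp, zeroLocus_radical]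
    _ = Order.krullDim (Set.Icc p M) := ringKrullDim_quotient_eq_krullDim_Icc K hpM hm
    _ ≤ _ := krullDim_mono Icc_subset

theorem zeroLocus_iInf_inter_primesMeeting_subset {ι : Type*} (J : Ideal R)
    (Q : ι → Ideal R) (s : Finset ι) :
    zeroLocus ((⨅ i ∈ s, Q i : Ideal R) : Set R) ∩ primesMeeting J ⊆
      zeroLocus (extractionFrom J Q s : Set R) := by
  rintro P ⟨hIP, hPJ⟩
  obtain ⟨i, hi, hQP⟩ := mem_zeroLocus_iInf.mp hIP
  have hQJ : Q i ⊔ J ≠ ⊤ := ne_top_of_le_ne_top hPJ (sup_le_sup_right hQP J)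
  have extraction_le : extractionFrom J Q s ≤ Q i :=
    iInf₂_le i (Finset.mem_filter.mpr ⟨hi, hQJ⟩)
  exact extraction_le.trans hQP

theorem ringKrullDim_quotient_extractionFrom (K : Type*) [Field K] [Algebra K R]
    [Algebra.FiniteType K R] {ι : Type*} (J : Ideal R) (Q : ι → Ideal R) (s : Finset ι)
    (hQ : ∀ i ∈ s, (Q i).radical.IsPrime) :
    ringKrullDim (R ⧸ extractionFrom J Q s) =
      Order.krullDim ↑(zeroLocus ((⨅ i ∈ s, Q i : Ideal R) : Set R) ∩ primesMeeting J) := by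
  apply le_antisymm
  · rw [extractionFrom, ringKrullDim_quotient_iInf]
    refine iSup₂_le fun i hi ↦ ?_
    obtain ⟨his, hQJ⟩ := Finset.mem_filter.mp hi
    exact (ringKrullDim_quotient_le_krullDim_inter_primesMeeting K (hQ i his) hQJ).trans
      (krullDim_mono (Set.inter_subset_inter_left _
        (zeroLocus_anti_mono_ideal (iInf₂_le i his))))
  · rw [ringKrullDim_quotient]
    exact krullDim_mono (zeroLocus_iInf_inter_primesMeeting_subset J Q s)

end Extraction

section ControlOrder

variable {σ : Type*} {lt : (σ →₀ ℕ) → (σ →₀ ℕ) → Prop}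

theorem exists_mem_forall_ne_rel {α : Type*} (r : α → α → Prop) [IsStrictTotalOrder α r]
    {s : Finset α} (hs : s.Nonempty) : ∃ m ∈ s, ∀ a ∈ s, a ≠ m → r a m := by
  let := linearOrderOfSTO r
  exact ⟨s.max' hs, s.max'_mem hs, fun a ha hne ↦ lt_of_le_of_ne (s.le_max' a ha) hne⟩

theorem IsSemigroupOrder.exists_isLeadingMonomial {K : Type*} [CommSemiring K]
    (h : IsSemigroupOrder lt) {f : MvPolynomial σ K} (hf : f ≠ 0) :
    ∃ m, IsLeadingMonomial lt f m := by
  have := h.1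
  exact exists_mem_forall_ne_rel lt (MvPolynomial.support_nonempty.mpr hf)

theorem IsSemigroupOrder.one_add_mem_SDen_iff {K : Type*} [CommRing K]
    (h : IsSemigroupOrder lt) (f : MvPolynomial σ K) :
    1 + f ∈ SDen K lt ↔ ∀ m ∈ f.support, lt m 0 := by
  have := h.1
  constructor
  · rintro ⟨g, hfg, hg⟩ m hm
    obtain rfl : f = g := add_left_cancel hfg
    rcases hg with rfl | ⟨l, ⟨-, l_max⟩, hl⟩
    · simp at hm
    · obtain rfl | hml := eq_or_ne m l
      · exact hl
      · exact _root_.trans (l_max m hm hml) hl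
  · intro hf
    refine ⟨f, rfl, or_iff_not_imp_left.mpr fun hf0 ↦ ?_⟩
    obtain ⟨l, hl⟩ := h.exists_isLeadingMonomial hf0
    exact ⟨l, hl, hf l hl.1⟩

theorem IsSemigroupOrder.not_add_lt_zero (h : IsSemigroupOrder lt) {a b : σ →₀ ℕ}
    (ha : ¬ lt a 0) (hb : ¬ lt b 0) : ¬ lt (a + b) 0 := by
  have := h.1
  intro hab
  rcases trichotomous_of lt b 0 with hb' | rfl | hb'
  · exact hb hb'
  · exact ha (by rwa [add_zero] at hab)
  · have a_lt := h.2 0 b a hb'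
    rw [add_zero] at a_lt
    exact ha (_root_.trans a_lt hab)

theorem IsSemigroupOrder.not_lt_zero_of_forall_isLocalVar (h : IsSemigroupOrder lt)
    {m : σ →₀ ℕ} (hm : ∀ i, IsLocalVar lt i → m i = 0) : ¬ lt m 0 := by
  have := h.1
  let nonneg : AddSubmonoid (σ →₀ ℕ) :=
    { carrier := {a | ¬ lt a 0}
      zero_mem' := irrefl 0
      add_mem' := h.not_add_lt_zero }
  have m_mem : m.sum Finsupp.single ∈ nonneg := by
    refine nonneg.sum_mem fun i hi ↦ ?_
    have hi' : Finsupp.single i 1 ∈ nonneg := fun hloc ↦ Finsupp.mem_support_iff.mp hi (hm i hloc)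
    simpa using nonneg.nsmul_mem hi' (m i)
  rwa [Finsupp.sum_single] at m_mem

theorem IsControlOrder.lt_zero_iff (h : IsControlOrder lt) (m : σ →₀ ℕ) :
    lt m 0 ↔ ∃ i, IsLocalVar lt i ∧ m i ≠ 0 := by
  refine ⟨fun hm ↦ ?_, h.2 m⟩
  by_contra! hcon
  exact h.1.not_lt_zero_of_forall_isLocalVar hcon hm

theorem IsControlOrder.mem_SDen_iff {K : Type*} [CommRing K] (h : IsControlOrder lt)
    (f : MvPolynomial σ K) :
    f ∈ SDen K lt ↔ f - 1 ∈ Ideal.span (MvPolynomial.X '' {i | IsLocalVar lt i}) := by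
  rw [MvPolynomial.mem_ideal_span_X_image, ← add_sub_cancel 1 f, h.1.one_add_mem_SDen_iff,
    add_sub_cancel]
  simp only [h.lt_zero_iff, Set.mem_ofPred_eq]

end ControlOrder

section Substitution

open MvPolynomial

variable {K : Type*} [CommRing K] {n s : ℕ} (g : Fin s → MvPolynomial (Fin n) K)

theorem substHom_rename_inl (f : MvPolynomial (Fin n) K) :
    substHom g (rename Sum.inl f) = f := by
  rw [substHom, aeval_rename, Sum.elim_comp_inl, aeval_X_left_apply]

theorem substHom_surjective : Function.Surjective (substHom g) :=
  fun f ↦ ⟨_, substHom_rename_inl g f⟩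

theorem sub_rename_substHom_mem_liftIdeal (I : Ideal (MvPolynomial (Fin n) K))
    (f : MvPolynomial (Fin n ⊕ Fin s) K) :
    f - rename Sum.inl (substHom g f) ∈ liftIdeal g I := by
  let π := Ideal.Quotient.mkₐ K (liftIdeal g I)
  have π_comp : π = (π.comp (rename Sum.inl)).comp (substHom g) := by
    refine algHom_ext ?_
    rintro (i | w)
    · simp [substHom]
    · simp only [substHom, AlgHom.comp_apply, aeval_X, Sum.elim_inr]
      exact Ideal.Quotient.eq.mpr (Ideal.mem_sup_right (Ideal.subset_span ⟨w, rfl⟩))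
  exact Ideal.Quotient.eq.mp (DFunLike.congr_fun π_comp f)

theorem liftIdeal_eq_comap_substHom (I : Ideal (MvPolynomial (Fin n) K)) :
    liftIdeal g I = I.comap (substHom g).toRingHom := by
  apply le_antisymm
  · refine sup_le (Ideal.map_le_iff_le_comap.mpr fun f hf ↦ ?_) (Ideal.span_le.mpr ?_)
    · change substHom g (rename Sum.inl f) ∈ I
      rwa [substHom_rename_inl]
    · rintro _ ⟨w, rfl⟩
      change substHom g (X (Sum.inr w) - rename Sum.inl (g w)) ∈ I
      rw [map_sub, substHom_rename_inl]
      simp [substHom]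
  · intro f hf
    have rename_mem : rename Sum.inl (substHom g f) ∈ liftIdeal g I :=
      Ideal.mem_sup_left (Ideal.mem_map_of_mem _ hf)
    simpa using add_mem (sub_rename_substHom_mem_liftIdeal g I f) rename_mem

theorem map_substHom_span_X_inr :
    (Ideal.span (X '' Set.range Sum.inr)).map (substHom g).toRingHom =
      Ideal.span (Set.range g) := by
  rw [Ideal.map_span, ← Set.range_comp, ← Set.range_comp]
  congr 2
  ext w
  simp [substHom]

end Substitution

theorem stmt_11_general {K : Type*} [Field K] {n s : ℕ}
    (lt : ((Fin n ⊕ Fin s) →₀ ℕ) → ((Fin n ⊕ Fin s) →₀ ℕ) → Prop)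
    (hctrl : IsControlOrder lt)
    (hloc : ∀ v : Fin n ⊕ Fin s, IsLocalVar lt v ↔ ∃ w : Fin s, v = Sum.inr w)
    (S' : Submonoid (MvPolynomial (Fin n ⊕ Fin s) K))
    (hS' : (S' : Set (MvPolynomial (Fin n ⊕ Fin s) K)) = SDen K lt)
    (B : Type*) [CommRing B] [Algebra (MvPolynomial (Fin n ⊕ Fin s) K) B] [IsLocalization S' B]
    (g : Fin s → MvPolynomial (Fin n) K)
    {ι : Type*} (t : Finset ι) (Q : ι → Ideal (MvPolynomial (Fin n) K))
    (hQ : ∀ i ∈ t, (Q i).radical.IsPrime) :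
    ringKrullDim (MvPolynomial (Fin n) K ⧸ extractionFrom (Ideal.span (Set.range g)) Q t) =
      ringKrullDim (B ⧸ (liftIdeal g (⨅ i ∈ t, Q i)).map
        (algebraMap (MvPolynomial (Fin n ⊕ Fin s) K) B)) := by
  have localVars : {v | IsLocalVar lt v} = Set.range Sum.inr := by
    ext v
    simp only [Set.mem_ofPred_eq, hloc, Set.mem_range, eq_comm]
  have mem_S' (f : MvPolynomial (Fin n ⊕ Fin s) K) :
      f ∈ S' ↔ f - 1 ∈ Ideal.span (MvPolynomial.X '' Set.range Sum.inr) := by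
    rw [← localVars, ← hctrl.mem_SDen_iff, ← hS', SetLike.mem_coe]
  rw [ringKrullDim_quotient_map_algebraMap mem_S', liftIdeal_eq_comap_substHom,
    krullDim_zeroLocus_comap_inter_primesMeeting (substHom_surjective g),
    map_substHom_span_X_inr, ringKrullDim_quotient_extractionFrom K _ Q t hQ]

/-- for a control order on `A' = K[x,t]` with local variables exactly the
`t`'s, the Krull dimension of `A/β(I,J)` equals the Krull dimension of `S'⁻¹A' / S'⁻¹I'`. -/
theorem stmt_11 {K : Type*} [Field K] {n s : ℕ}
    (lt : ((Fin n ⊕ Fin s) →₀ ℕ) → ((Fin n ⊕ Fin s) →₀ ℕ) → Prop)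
    (hctrl : IsControlOrder lt)
    (hloc : ∀ v : Fin n ⊕ Fin s, IsLocalVar lt v ↔ ∃ w : Fin s, v = Sum.inr w)
    (S' : Submonoid (MvPolynomial (Fin n ⊕ Fin s) K))
    (hS' : (S' : Set (MvPolynomial (Fin n ⊕ Fin s) K)) = SDen K lt)
    (I J : Ideal (MvPolynomial (Fin n) K)) (hI : I ≠ ⊤) (hJ : J ≠ ⊤)
    (g : Fin s → MvPolynomial (Fin n) K) (hJg : J = Ideal.span (Set.range g))
    (k : ℕ) (Qd : Fin k → Ideal (MvPolynomial (Fin n) K))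
    (hQd : MinPrimDecOn I Qd Finset.univ) :
    ringKrullDim (MvPolynomial (Fin n) K ⧸ extractionFrom J Qd Finset.univ) =
      ringKrullDim (Localization S' ⧸ (liftIdeal g I).map
        (algebraMap (MvPolynomial (Fin n ⊕ Fin s) K) (Localization S'))) := by
  obtain ⟨rfl, hprimary, -, -⟩ := hQd
  subst hJg
  exact stmt_11_general lt hctrl hloc S' hS' _ g Finset.univ Qd fun i hi ↦
    Ideal.isPrime_radical (hprimary i hi)
end
end

section
/- Let I and J be ideals of A = K[x₁,…,xₙ] with I proper, and let I = Q₁ ∩ … ∩ Q_k be any primary decomposition of I (each Q_i primary, not necessarily minimal). Let E = {Q_i : Q_i + J ≠ A}. Then β(I,J) = ∩_{Q ∈ E} Q, where an empty intersection is interpreted as A. -/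
open scoped Classical

noncomputable section

/-!
Localize at the multiplicative set `1 + J`. A primary ideal `Q` meets `1 + J` exactly when
`Q + J` is the whole ring, in which case it is killed by extending to the localization and
contracting back; all other primary ideals survive unchanged. Since localization commutes with
finite intersections, the extraction is the contraction of the extension of `I`, which depends
only on `I` and `J`.
-/

section

variable {R : Type*} [CommRing R]

/-- The multiplicative set `1 + J`, encoded as the preimage of `1` in `R ⧸ J`; localizing at it
realizes the extraction by `J`. -/
def oneAddSubmonoid (J : Ideal R) : Submonoid R :=
  MonoidHom.mker (Ideal.Quotient.mk J)

theorem mem_oneAddSubmonoid_iff {J : Ideal R} {x : R} : x ∈ oneAddSubmonoid J ↔ x - 1 ∈ J :=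
  Ideal.Quotient.mk_eq_one_iff_sub_mem x

theorem disjoint_oneAddSubmonoid_iff_sup_ne_top {J Q : Ideal R} :
    Disjoint (oneAddSubmonoid J : Set R) Q ↔ Q ⊔ J ≠ ⊤ := by
  rw [← not_iff_not, not_ne_iff, Set.not_disjoint_iff, Ideal.eq_top_iff_one, Submodule.mem_sup]
  constructor
  · rintro ⟨x, hxJ, hxQ⟩
    exact ⟨x, hxQ, 1 - x, sub_mem_comm_iff.1 (mem_oneAddSubmonoid_iff.1 hxJ), by ring⟩
  · rintro ⟨x, hxQ, y, hyJ, hxy⟩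
    refine ⟨x, mem_oneAddSubmonoid_iff.2 ?_, hxQ⟩
    rw [← hxy, sub_add_cancel_left]
    exact J.neg_mem hyJ

theorem under_map_eq_top_of_not_disjoint (M : Submonoid R) (S : Type*) [CommRing S] [Algebra R S]
    [IsLocalization M S] {I : Ideal R} (hI : ¬ Disjoint (M : Set R) I) :
    (I.map (algebraMap R S)).under R = ⊤ := by
  rw [not_ne_iff.1 (mt (IsLocalization.map_algebraMap_ne_top_iff_disjoint M S I).1 hI),
    Ideal.under_top]

theorem under_map_biInf (M : Submonoid R) (S : Type*) [CommRing S] [Algebra R S]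
    [IsLocalization M S] {ι : Type*} (s : Finset ι) (Q : ι → Ideal R) :
    ((⨅ i ∈ s, Q i).map (algebraMap R S)).under R =
      ⨅ i ∈ s, ((Q i).map (algebraMap R S)).under R := by
  simp only [← Finset.inf_eq_iInf, ← IsLocalization.mapFrameHom_apply M, map_finset_inf,
    Ideal.under_def, Ideal.comap_finsetInf, Function.comp_def]

theorem under_map_biInf_of_isPrimary (M : Submonoid R) (S : Type*) [CommRing S] [Algebra R S]
    [IsLocalization M S] {ι : Type*} (s : Finset ι) (Q : ι → Ideal R)
    (hQ : ∀ i ∈ s, (Q i).IsPrimary) :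
    ((⨅ i ∈ s, Q i).map (algebraMap R S)).under R =
      ⨅ i ∈ s.filter (fun i => Disjoint (M : Set R) (Q i)), Q i := by
  simp only [under_map_biInf M S, Finset.mem_filter, iInf_and]
  refine iInf_congr fun i => iInf_congr fun hi => ?_
  by_cases hdisj : Disjoint (M : Set R) (Q i)
  · rw [iInf_pos hdisj, IsLocalization.under_map_of_isPrimary_disjoint M S (hQ i hi) hdisj]
  · rw [iInf_neg hdisj, under_map_eq_top_of_not_disjoint M S hdisj]

theorem extractionFrom_eq_under_map (J : Ideal R) {ι : Type*} (s : Finset ι) (Q : ι → Ideal R)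
    (hQ : ∀ i ∈ s, (Q i).IsPrimary) :
    extractionFrom J Q s =
      ((⨅ i ∈ s, Q i).map (algebraMap R (Localization (oneAddSubmonoid J)))).under R := by
  simp only [under_map_biInf_of_isPrimary (oneAddSubmonoid J) _ s Q hQ, extractionFrom,
    disjoint_oneAddSubmonoid_iff_sup_ne_top]

theorem stmt_12_general (J : Ideal R) {ι κ : Type*} (s : Finset ι) (Q : ι → Ideal R)
    (t : Finset κ) (N : κ → Ideal R) (hQ : ∀ i ∈ s, (Q i).IsPrimary)
    (hN : ∀ j ∈ t, (N j).IsPrimary) (hdec : ⨅ i ∈ s, Q i = ⨅ j ∈ t, N j) :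
    extractionFrom J Q s = extractionFrom J N t := by
  rw [extractionFrom_eq_under_map J s Q hQ, extractionFrom_eq_under_map J t N hN, hdec]

end

/-- for any (not necessarily minimal) primary decomposition `I = ⋂ Q i`,
the extraction `β(I,J)` equals the intersection of those `Q i` with `Q i + J ≠ A`. -/
theorem stmt_12 {K : Type*} [Field K] {n : ℕ}
    (I J : Ideal (MvPolynomial (Fin n) K)) (hI : I ≠ ⊤)
    (k : ℕ) (Q : Fin k → Ideal (MvPolynomial (Fin n) K))
    (hdec : I = ⨅ i, Q i) (hprim : ∀ i, (Q i).IsPrimary)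
    (l : ℕ) (M : Fin l → Ideal (MvPolynomial (Fin n) K))
    (hM : MinPrimDecOn I M Finset.univ) :
    extractionFrom J M Finset.univ = extractionFrom J Q Finset.univ := by
  obtain ⟨hMdec, hMprim, -, -⟩ := hM
  exact stmt_12_general J _ M _ Q hMprim (fun i _ => hprim i) (by rw [← hMdec, hdec]; simp)
end
end

section
/- For any ideals I, J of A = K[x₁,…,xₙ] with I proper, β(√I, J) = √(β(I, J)), where √ denotes the radical of an ideal. -/
open scoped Classical

noncomputable section

/-!
The radical of `β(I, J)`, computed from any finite primary decomposition `I = ⋂ Q i`, is the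
intersection of all primes `p ⊇ I` with `p + J ≠ A`: the primes `√(Q i)` with `Q i + J ≠ A` are
among these, and conversely each such `p` contains some `Q i`, for which `Q i + J ≠ A` too. This
set of primes depends only on `√I`, so `β(I, J)` and `β(√I, J)` have the same radical. Finally
`β(√I, J)` is itself radical, because irredundancy forces the primary components of a radical
ideal to be radical.
-/

section

variable {R : Type*} [CommRing R] {ι : Type*}

theorem radical_biInf_finset (s : Finset ι) (Q : ι → Ideal R) :
    (⨅ i ∈ s, Q i).radical = ⨅ i ∈ s, (Q i).radical := by
  simpa only [Finset.inf_eq_iInf, Ideal.radicalInfTopHom_apply, Function.comp_apply]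
    using map_finset_inf Ideal.radicalInfTopHom s Q

theorem radical_sup_eq_top_iff {I J : Ideal R} : I.radical ⊔ J = ⊤ ↔ I ⊔ J = ⊤ := by
  rw [← Ideal.radical_eq_top, Ideal.radical_sup, Ideal.radical_idem, ← Ideal.radical_sup,
    Ideal.radical_eq_top]

theorem isRadical_of_isRadical_inf {N Q : Ideal R} (hQ : Q.IsPrimary)
    (hNQ : (N ⊓ Q).IsRadical) (hle : ¬ N ≤ Q) : Q.IsRadical := by
  have inf_radical_le : N ⊓ Q.radical ≤ Q :=
    calc N ⊓ Q.radical ≤ N.radical ⊓ Q.radical := inf_le_inf_right _ Ideal.le_radical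
      _ = (N ⊓ Q).radical := (Ideal.radical_inf N Q).symm
      _ = N ⊓ Q := hNQ.radical
      _ ≤ Q := inf_le_right
  obtain ⟨f, hfN, hfQ⟩ := SetLike.not_le_iff_exists.1 hle
  have hf_radical : f ∉ Q.radical := fun hf => hfQ (inf_radical_le ⟨hfN, hf⟩)
  intro x hx
  have hxf : x * f ∈ Q :=
    inf_radical_le ⟨N.mul_mem_left x hfN, Q.radical.mul_mem_right f hx⟩
  exact ((Ideal.isPrimary_iff.1 hQ).2 hxf).resolve_right hf_radical

theorem isRadical_of_isRadical_biInf_finset {s : Finset ι} {Q : ι → Ideal R}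
    (hrad : (⨅ i ∈ s, Q i).IsRadical) {j : ι} (hj : j ∈ s) (hQ : (Q j).IsPrimary)
    (hirr : ¬ (⨅ i ∈ s.erase j, Q i) ≤ Q j) : (Q j).IsRadical := by
  refine isRadical_of_isRadical_inf hQ ?_ hirr
  rwa [inf_comm, ← Finset.iInf_insert, Finset.insert_erase hj]

theorem isRadical_extractionFrom (J : Ideal R) {s : Finset ι} {Q : ι → Ideal R}
    (hQ : ∀ i ∈ s, (Q i).IsRadical) : (extractionFrom J Q s).IsRadical :=
  Ideal.isRadical_iInf _ fun i => Ideal.isRadical_iInf _ fun hi =>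
    hQ i (Finset.mem_of_mem_filter i hi)

theorem radical_extractionFrom_eq_sInf (J : Ideal R) {s : Finset ι} {Q : ι → Ideal R}
    (hQ : ∀ i ∈ s, (Q i).IsPrimary) :
    (extractionFrom J Q s).radical =
      sInf {p | p.IsPrime ∧ (⨅ i ∈ s, Q i) ≤ p ∧ p ⊔ J ≠ ⊤} := by
  apply le_antisymm
  · refine le_sInf fun p ⟨hp, hle, hpJ⟩ => ?_
    obtain ⟨i, his, hip⟩ : ∃ i ∈ s, Q i ≤ p := by
      rwa [← hp.inf_le', Finset.inf_eq_iInf]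
    have hiJ : Q i ⊔ J ≠ ⊤ := ne_top_of_le_ne_top hpJ (sup_le_sup_right hip J)
    have extraction_le : extractionFrom J Q s ≤ Q i :=
      iInf₂_le i (Finset.mem_filter.2 ⟨his, hiJ⟩)
    exact hp.radical_le_iff.2 (extraction_le.trans hip)
  · rw [extractionFrom, radical_biInf_finset]
    refine le_iInf₂ fun i hi => sInf_le ?_
    obtain ⟨his, hiJ⟩ := Finset.mem_filter.1 hi
    exact ⟨Ideal.isPrime_radical (hQ i his), (iInf₂_le i his).trans Ideal.le_radical,
      radical_sup_eq_top_iff.not.2 hiJ⟩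

theorem stmt_14_general {κ : Type*} (I J : Ideal R)
    {s : Finset ι} {Q : ι → Ideal R} (hIQ : I = ⨅ i ∈ s, Q i) (hQ : ∀ i ∈ s, (Q i).IsPrimary)
    {t : Finset κ} {P : κ → Ideal R} (hIP : I.radical = ⨅ j ∈ t, P j)
    (hP : ∀ j ∈ t, (P j).IsPrimary) (hirr : ∀ j ∈ t, ¬ (⨅ i ∈ t.erase j, P i) ≤ P j) :
    extractionFrom J P t = (extractionFrom J Q s).radical := by
  have hP_radical : ∀ j ∈ t, (P j).IsRadical := fun j hj =>
    isRadical_of_isRadical_biInf_finset (hIP ▸ Ideal.radical_isRadical I) hj (hP j hj) (hirr j hj)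
  have same_primes : {p : Ideal R | p.IsPrime ∧ I.radical ≤ p ∧ p ⊔ J ≠ ⊤} =
      {p | p.IsPrime ∧ I ≤ p ∧ p ⊔ J ≠ ⊤} :=
    Set.ext fun p => and_congr_right fun hp => and_congr_left' hp.radical_le_iff
  calc extractionFrom J P t
      = (extractionFrom J P t).radical := (isRadical_extractionFrom J hP_radical).radical.symm
    _ = sInf {p | p.IsPrime ∧ I.radical ≤ p ∧ p ⊔ J ≠ ⊤} := by
      rw [radical_extractionFrom_eq_sInf J hP, hIP]
    _ = sInf {p | p.IsPrime ∧ I ≤ p ∧ p ⊔ J ≠ ⊤} := by rw [same_primes]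
    _ = (extractionFrom J Q s).radical := by rw [radical_extractionFrom_eq_sInf J hQ, hIQ]

end

/-- `β(√I, J) = √(β(I, J))`. -/
theorem stmt_14 {K : Type*} [Field K] {n : ℕ}
    (I J : Ideal (MvPolynomial (Fin n) K)) (hI : I ≠ ⊤)
    (k : ℕ) (Q : Fin k → Ideal (MvPolynomial (Fin n) K))
    (hQ : MinPrimDecOn I Q Finset.univ)
    (l : ℕ) (P : Fin l → Ideal (MvPolynomial (Fin n) K))
    (hP : MinPrimDecOn I.radical P Finset.univ) :
    extractionFrom J P Finset.univ = (extractionFrom J Q Finset.univ).radical :=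
  stmt_14_general I J hQ.1 hQ.2.1 hP.1 hP.2.1 hP.2.2.2
end
end

section
/- For any ideals I, J, L of A = K[x₁,…,xₙ] with I proper, β(I, J ∩ L) = β(I, J) ∩ β(I, L). -/
open scoped Classical

noncomputable section

theorem ideal_sup_inf_eq_top_iff {R : Type*} [Semiring R] {P J L : Ideal R}
    [J.IsTwoSided] :
    P ⊔ J ⊓ L = ⊤ ↔ P ⊔ J = ⊤ ∧ P ⊔ L = ⊤ := by
  refine ⟨fun h => ⟨?_, ?_⟩, fun ⟨hJ, hL⟩ => ?_⟩
  · exact eq_top_mono (sup_le_sup_left inf_le_left P) h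
  · exact eq_top_mono (sup_le_sup_left inf_le_right P) h
  · have hJL : P ⊔ J * L = ⊤ := (Ideal.sup_mul_eq_of_coprime_right hL).trans hJ
    exact eq_top_mono (sup_le_sup_left Ideal.mul_le_inf P) hJL

theorem stmt_16_general {R : Type*} [CommRing R] {ι : Type*} (J L : Ideal R)
    (Q : ι → Ideal R) (s : Finset ι) :
    extractionFrom (J ⊓ L) Q s = extractionFrom J Q s ⊓ extractionFrom L Q s := by
  have filter_eq_union : s.filter (fun i => Q i ⊔ J ⊓ L ≠ ⊤) =
      s.filter (fun i => Q i ⊔ J ≠ ⊤) ∪ s.filter (fun i => Q i ⊔ L ≠ ⊤) := by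
    simp only [ne_eq, ideal_sup_inf_eq_top_iff, not_and_or, Finset.filter_or]
  rw [extractionFrom, filter_eq_union, Finset.iInf_union, ← extractionFrom, ← extractionFrom]

/-- `β(I, J ∩ L) = β(I, J) ∩ β(I, L)`. -/
theorem stmt_16 {K : Type*} [Field K] {n : ℕ}
    (I J L : Ideal (MvPolynomial (Fin n) K)) (hI : I ≠ ⊤)
    (k : ℕ) (Q : Fin k → Ideal (MvPolynomial (Fin n) K))
    (hQ : MinPrimDecOn I Q Finset.univ) :
    extractionFrom (J ⊓ L) Q Finset.univ =
      extractionFrom J Q Finset.univ ⊓ extractionFrom L Q Finset.univ :=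
  stmt_16_general J L Q Finset.univ
end
end

section
/- For any ideals I, J of A = K[x₁,…,xₙ] with I and J proper, β(I, β(J, I)) = β(I, J). -/
open scoped Classical

noncomputable section

/-!
Split the components `U j` of `J` into those comaximal with `I`, with intersection `C`, and the
others, with intersection `β(J, I)`, so that `J = β(J, I) ∩ C` and `C + I = A`. If an ideal `P`
contains `I`, then `P + C = A`, and intersecting with `C` does not change the sum with `P`:
`P + J = P + β(J, I)`. For `P = Q i` this says that `J` and `β(J, I)` select the same components
of `I`.
-/

section Extraction

variable {R : Type*} [CommRing R] {ι κ : Type*}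

lemma sup_inf_eq_sup_of_sup_eq_top {P C : Ideal R} (hPC : P ⊔ C = ⊤) (B : Ideal R) :
    P ⊔ B ⊓ C = P ⊔ B := by
  apply le_antisymm (sup_le_sup_left inf_le_left P)
  calc P ⊔ B = P ⊔ B * C := (Ideal.sup_mul_eq_of_coprime_right hPC).symm
    _ ≤ P ⊔ B ⊓ C := sup_le_sup_left Ideal.mul_le_inf P

lemma extractionFrom_inf_iInf_filter (I : Ideal R) (U : κ → Ideal R) (t : Finset κ) :
    extractionFrom I U t ⊓ ⨅ j ∈ t.filter (fun j => U j ⊔ I = ⊤), U j = ⨅ j ∈ t, U j := by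
  rw [extractionFrom, ← Finset.iInf_union, Finset.union_comm, Finset.filter_union_filter_not_eq]

lemma sup_iInf_filter_eq_top {I P : Ideal R} (hIP : I ≤ P) (U : κ → Ideal R) (t : Finset κ) :
    P ⊔ ⨅ j ∈ t.filter (fun j => U j ⊔ I = ⊤), U j = ⊤ := by
  refine Ideal.sup_iInf_eq_top fun j hj => top_le_iff.mp ?_
  calc ⊤ = U j ⊔ I := (Finset.mem_filter.mp hj).2.symm
    _ ≤ P ⊔ U j := sup_le le_sup_right (hIP.trans le_sup_left)

lemma sup_extractionFrom_eq_sup_iInf {I P : Ideal R} (hIP : I ≤ P) (U : κ → Ideal R)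
    (t : Finset κ) : P ⊔ extractionFrom I U t = P ⊔ ⨅ j ∈ t, U j := by
  rw [← extractionFrom_inf_iInf_filter I U t,
    sup_inf_eq_sup_of_sup_eq_top (sup_iInf_filter_eq_top hIP U t)]

lemma extractionFrom_congr {J J' : Ideal R} {Q : ι → Ideal R} {s : Finset ι}
    (h : ∀ i ∈ s, Q i ⊔ J = ⊤ ↔ Q i ⊔ J' = ⊤) :
    extractionFrom J Q s = extractionFrom J' Q s := by
  rw [extractionFrom, extractionFrom, Finset.filter_congr fun i hi => not_congr (h i hi)]

theorem stmt_17_general {I J : Ideal R} {Q : ι → Ideal R} {s : Finset ι} {U : κ → Ideal R}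
    {t : Finset κ} (hQ : I ≤ ⨅ i ∈ s, Q i) (hU : J = ⨅ j ∈ t, U j) :
    extractionFrom (extractionFrom I U t) Q s = extractionFrom J Q s := by
  refine extractionFrom_congr fun i hi => ?_
  have hIQ : I ≤ Q i := hQ.trans (iInf₂_le i hi)
  rw [hU, sup_extractionFrom_eq_sup_iInf hIQ]

end Extraction

/-- `β(I, β(J, I)) = β(I, J)`. -/
theorem stmt_17 {K : Type*} [Field K] {n : ℕ}
    (I J : Ideal (MvPolynomial (Fin n) K)) (hI : I ≠ ⊤) (hJ : J ≠ ⊤)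
    (k : ℕ) (Q : Fin k → Ideal (MvPolynomial (Fin n) K))
    (hQ : MinPrimDecOn I Q Finset.univ)
    (l : ℕ) (U : Fin l → Ideal (MvPolynomial (Fin n) K))
    (hU : MinPrimDecOn J U Finset.univ) :
    extractionFrom (extractionFrom I U Finset.univ) Q Finset.univ =
      extractionFrom J Q Finset.univ := by
  exact stmt_17_general hQ.1.le hU.1
end
end
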